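/- Let (R, 𝔪) be a regular local ring of characteristic p > 0, let f ∈ R, and let q = p^e with ord_𝔪(f) = q. Then the F-threshold ft^𝔪(f) equals 1/q if and only if f ∈ 𝔪^{[q]}, where 𝔪^{[q]} is the ideal generated by q-th powers of elements of 𝔪. -/

import Mathlib

open IsLocalRing

/-!
Quotients of a regular local ring by parameters are regular, hence domains, so a regular system of
parameters `x` is a regular sequence, and so is `x i ^ b i` for all exponents `b i > 0`. This yields
the colon identity `(x i ^ (a i + b i)) : ∏ x i ^ a i = (x i ^ b i)`.

Let `f` have order `N`. A monomial of minimal degree in `f` survives Frobenius, so `f ^ t` has order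
`t * N`. As `𝔪^{[Q]} ⊆ 𝔪 ^ Q`, this gives `ft(f) ≥ 1 / N`, while `f ∈ 𝔪^{[q]}` gives
`ft(f) ≤ 1 / q`.

If `f ∉ 𝔪^{[q]}`, some multiple of `f` is congruent modulo `𝔪^{[q]}` to the monomial
`∏ x i ^ (q - 1)`, which generates the socle. Taking `Q`-th powers and using the colon identity,
`f ^ Q * g ∈ 𝔪^{[q Q]}` implies `g ∈ 𝔪^{[Q]}`. So if `f ^ t ∈ 𝔪^{[Q]}`, then `f ^ (t q) ∈ 𝔪^{[q Q]}`
and hence `f ^ (t q - Q) ∈ 𝔪^{[Q]}`, and comparing orders gives `(t q - Q) N ≥ Q`. Therefore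
`ft(f) ≥ (1 + 1 / N) / q > 1 / q`.
-/

section RegularLocalRing

open Ideal (span)
open RingTheory.Sequence

universe u

theorem encard_setOf_mem_le_length {α : Type*} (l : List α) : {a | a ∈ l}.encard ≤ l.length := by
  classical
  rw [← List.coe_toFinset, Set.encard_coe_eq_coe_finsetCard]
  exact_mod_cast l.toFinset_card_le

variable {R : Type u} [CommRing R] [IsLocalRing R]

theorem isLocalRing_quotient {I : Ideal R} (hI : I ≠ ⊤) : IsLocalRing (R ⧸ I) :=
  have := Ideal.Quotient.nontrivial_iff.mpr hI
  .of_surjective' (Ideal.Quotient.mk I) Ideal.Quotient.mk_surjective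

theorem span_singleton_ne_top_of_mem_maximalIdeal {x : R}
    (hx : x ∈ maximalIdeal R) : span {x} ≠ ⊤ :=
  fun h => (mem_maximalIdeal x).mp hx (Ideal.span_singleton_eq_top.mp h)

theorem span_image_mk_eq_maximalIdeal {x : R} {s : Set R}
    [IsLocalRing (R ⧸ span {x})] (hs : span (insert x s) = maximalIdeal R) :
    span (Ideal.Quotient.mk (span {x}) '' s) = maximalIdeal (R ⧸ span {x}) := by
  rw [← map_maximalIdeal_of_surjective _ Ideal.Quotient.mk_surjective, ← hs, Ideal.map_span,
    Set.image_insert_eq, Ideal.Quotient.mk_singleton_self, Ideal.span_insert]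
  simp

theorem exists_span_insert_erase_eq_maximalIdeal [DecidableEq R] {s : Finset R} {x : R}
    (hs : span (s : Set R) = maximalIdeal R) (hx : x ∈ maximalIdeal R)
    (hx' : x ∉ maximalIdeal R ^ 2) :
    ∃ y ∈ s, span (insert x (s.erase y : Set R)) = maximalIdeal R := by
  obtain ⟨c, -, hc⟩ := Submodule.mem_span_finset.mp (hs ▸ hx : x ∈ span (s : Set R))
  have hsm : ∀ a ∈ s, a ∈ maximalIdeal R := fun a ha => hs ▸ Ideal.subset_span ha
  obtain ⟨y, hys, hy⟩ : ∃ y ∈ s, IsUnit (c y) := by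
    by_contra! hunit
    refine hx' (hc ▸ pow_two (maximalIdeal R) ▸ Ideal.sum_mem _ fun a ha => ?_)
    exact Ideal.mul_mem_mul ((mem_maximalIdeal _).mpr (hunit a ha)) (hsm a ha)
  have hy_mem : y ∈ span (insert x (s.erase y : Set R)) := by
    rw [← Ideal.unit_mul_mem_iff_mem _ hy,
      show c y * y = x - ∑ b ∈ s.erase y, c b • b by
        rw [← hc, ← Finset.add_sum_erase s _ hys, smul_eq_mul, add_sub_cancel_right]]
    refine sub_mem (Ideal.subset_span (Set.mem_insert _ _)) (Ideal.sum_mem _ fun b hb => ?_)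
    exact Ideal.mul_mem_left _ _ (Ideal.subset_span (Set.mem_insert_of_mem _ hb))
  refine ⟨y, hys, le_antisymm ?_ (hs ▸ ?_)⟩
  · rw [Ideal.span_le, Set.insert_subset_iff]
    exact ⟨hx, fun a ha => hsm a (Finset.mem_of_mem_erase ha)⟩
  · refine Ideal.span_le.mpr fun a ha => ?_
    by_cases hay : a = y
    · exact hay ▸ hy_mem
    · exact Ideal.subset_span (Set.mem_insert_of_mem _ (Finset.mem_erase.mpr ⟨hay, ha⟩))

theorem ringKrullDim_eq_zero_of_maximalIdeal_le_minimalPrime {P : Ideal R}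
    (hP : P ∈ minimalPrimes R) (h : maximalIdeal R ≤ P) : ringKrullDim R = 0 := by
  have hPm : maximalIdeal R = P := (maximalIdeal.isMaximal R).eq_of_le hP.1.1.ne_top h
  rw [← maximalIdeal_height_eq_ringKrullDim, Ideal.height_eq_zero_iff.mpr (hPm ▸ hP)]
  rfl

variable [IsNoetherianRing R]

theorem ringKrullDim_eq_zero_of_maximalIdeal_le_sq (h : maximalIdeal R ≤ maximalIdeal R ^ 2) :
    ringKrullDim R = 0 := by
  have hbot : maximalIdeal R = ⊥ :=
    Submodule.eq_bot_of_le_smul_of_le_jacobson_bot (maximalIdeal R) _ (IsNoetherian.noetherian _)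
      (by rwa [smul_eq_mul, ← pow_two]) (maximalIdeal_le_jacobson _)
  exact ringKrullDim_eq_zero_of_isField (isField_iff_maximalIdeal_eq.mpr hbot)

theorem exists_mem_maximalIdeal_notMem_sq_notMem_minimalPrimes (h : ringKrullDim R ≠ 0) :
    ∃ x ∈ maximalIdeal R, x ∉ maximalIdeal R ^ 2 ∧ ∀ P ∈ minimalPrimes R, x ∉ P := by
  by_contra! hcover
  have hsub : (maximalIdeal R : Set R) ⊆
      ⋃ J ∈ insert (maximalIdeal R ^ 2) (minimalPrimes R), (J : Set R) := fun y hy => by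
    by_cases hy2 : y ∈ maximalIdeal R ^ 2
    · exact Set.mem_biUnion (Set.mem_insert _ _) hy2
    · obtain ⟨P, hP, hyP⟩ := hcover y hy hy2
      exact Set.mem_biUnion (Set.mem_insert_of_mem _ hP) hyP
  have hfin := (minimalPrimes.finite_of_isNoetherianRing R).insert (maximalIdeal R ^ 2)
  obtain ⟨J, rfl | hJ, hle⟩ := (Ideal.subset_union_prime_finite hfin (f := id)
    (maximalIdeal R ^ 2) (maximalIdeal R ^ 2) fun J hJ hne _ =>
      (Set.mem_of_mem_insert_of_ne hJ hne).1.1).mp hsub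
  · exact h (ringKrullDim_eq_zero_of_maximalIdeal_le_sq hle)
  · exact h (ringKrullDim_eq_zero_of_maximalIdeal_le_minimalPrime hJ hle)

theorem isDomain_of_isPrime_span_singleton {x : R} (hx : (span {x}).IsPrime)
    (hx' : ∀ P ∈ minimalPrimes R, x ∉ P) : IsDomain R := by
  obtain ⟨P, hP, hPx⟩ := Ideal.exists_minimalPrimes_le (I := ⊥) (J := span {x}) bot_le
  have : P.IsPrime := hP.1.1
  have hP_le : P ≤ span {x} * P := fun z hz => by
    obtain ⟨a, rfl⟩ := Ideal.mem_span_singleton'.mp (hPx hz)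
    exact mul_comm a x ▸ Ideal.mul_mem_mul (Ideal.mem_span_singleton_self x)
      ((this.mem_or_mem hz).resolve_right (hx' P hP))
  have hbot : P = ⊥ :=
    Submodule.eq_bot_of_le_smul_of_le_jacobson_bot (span {x}) P (IsNoetherian.noetherian _) hP_le
      ((le_maximalIdeal hx.ne_top).trans (maximalIdeal_le_jacobson _))
  exact @IsDomain.of_bot_isPrime R _ (hbot ▸ hP.1.1)

theorem ringKrullDim_le_encard_of_span_eq_maximalIdeal
    {s : Set R} (hs : span s = maximalIdeal R) : ringKrullDim R ≤ s.encard :=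
  (ringKrullDim_le_spanFinrank_maximalIdeal R).trans <| by
    rw [← hs]; exact_mod_cast Submodule.spanFinrank_span_le_encard s

theorem isRegularLocalRing_of_span_eq_maximalIdeal
    {s : Set R} (hs : span s = maximalIdeal R) (hcard : s.encard ≤ ringKrullDim R) :
    IsRegularLocalRing R := by
  refine .of_spanFinrank_maximalIdeal_le _ (le_trans ?_ hcard)
  rw [← hs]
  exact_mod_cast Submodule.spanFinrank_span_le_encard s

theorem isRegularLocalRing_quotient_span_singleton {x : R} {s : Set R} {n : ℕ}
    (hs : span (insert x s) = maximalIdeal R) (hcard : s.encard ≤ n)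
    (hdim : ringKrullDim R = (n + 1 : ℕ)) :
    IsRegularLocalRing (R ⧸ span {x}) ∧ ringKrullDim (R ⧸ span {x}) = n := by
  have hxm : x ∈ maximalIdeal R := hs ▸ Ideal.subset_span (Set.mem_insert x s)
  have := isLocalRing_quotient (span_singleton_ne_top_of_mem_maximalIdeal hxm)
  have hdim_ge : (n : WithBot ℕ∞) ≤ ringKrullDim (R ⧸ span {x}) := by
    have h := ringKrullDim_le_ringKrullDim_quotient_add_encard (R := R) {x} (by
      simpa [ringJacobson_eq_maximalIdeal] using hxm)
    rw [hdim, Set.encard_singleton, Nat.cast_add] at h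
    exact ENat.WithBot.add_le_add_one_right_iff.mp h
  have hfinrank : ((maximalIdeal (R ⧸ span {x})).spanFinrank : WithBot ℕ∞) ≤ n := by
    rw [← span_image_mk_eq_maximalIdeal hs]
    have h := (Submodule.spanFinrank_span_le_encard (R := R ⧸ span {x})
      (Ideal.Quotient.mk (span {x}) '' s)).trans ((Set.encard_image_le _ _).trans hcard)
    exact_mod_cast h
  exact ⟨.of_spanFinrank_maximalIdeal_le _ (hfinrank.trans hdim_ge),
    ((ringKrullDim_le_spanFinrank_maximalIdeal _).trans hfinrank).antisymm hdim_ge⟩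

theorem isDomain_of_isRegularLocalRing {R : Type u} [CommRing R] [IsRegularLocalRing R] :
    IsDomain R := by
  classical
  have hdim : ringKrullDim R = (maximalIdeal R).spanFinrank :=
    (IsRegularLocalRing.spanFinrank_maximalIdeal).symm
  generalize hn : (maximalIdeal R).spanFinrank = n at hdim
  induction n generalizing R with
  | zero =>
    have hm : maximalIdeal R = ⊥ :=
      (Submodule.spanFinrank_eq_zero_iff_eq_bot (IsNoetherian.noetherian _)).mp hn
    exact (isField_iff_maximalIdeal_eq.mpr hm).isDomain
  | succ n ih =>
    obtain ⟨x, hxm, hx2, hxP⟩ :=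
      exists_mem_maximalIdeal_notMem_sq_notMem_minimalPrimes (R := R) (by rw [hdim]; norm_cast)
    obtain ⟨s, hcard, hs⟩ :=
      Submodule.FG.exists_span_finset_card_eq_spanFinrank (maximalIdeal R).fg_of_isNoetherianRing
    obtain ⟨y, hys, hxs⟩ := exists_span_insert_erase_eq_maximalIdeal hs hxm hx2
    have hcard' : (s.erase y : Set R).encard ≤ n := by
      rw [Set.encard_coe_eq_coe_finsetCard, Finset.card_erase_of_mem hys, hcard, hn,
        Nat.add_sub_cancel]
    obtain ⟨hreg, hdim'⟩ := isRegularLocalRing_quotient_span_singleton hxs hcard' hdim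
    have hdom : IsDomain (R ⧸ span {x}) := ih (by
      rw [← hreg.spanFinrank_maximalIdeal] at hdim'; exact_mod_cast hdim') hdim'
    exact isDomain_of_isPrime_span_singleton ((Ideal.Quotient.isDomain_iff_prime _).mp hdom) hxP

theorem isWeaklyRegular_of_ofList_eq_maximalIdeal {l : List R}
    (hl : Ideal.ofList l = maximalIdeal R) (hdim : ringKrullDim R = l.length) :
    IsWeaklyRegular R l := by
  generalize hn : l.length = n at hdim
  induction n generalizing R with
  | zero => exact List.length_eq_zero_iff.mp hn ▸ .nil _ _
  | succ n ih =>
    obtain ⟨r, l, rfl⟩ := List.exists_cons_of_length_eq_add_one hn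
    rw [List.length_cons, Nat.add_right_cancel_iff] at hn
    have hspan : span (insert r {a | a ∈ l}) = maximalIdeal R := by
      rw [← hl, Ideal.span_insert, Ideal.ofList_cons, Ideal.ofList]
    have hcard : {a | a ∈ l}.encard ≤ n := hn ▸ encard_setOf_mem_le_length l
    obtain ⟨hreg, hdim'⟩ := isRegularLocalRing_quotient_span_singleton hspan hcard hdim
    have hr : IsSMulRegular R r := by
      have : IsRegularLocalRing R := isRegularLocalRing_of_span_eq_maximalIdeal hspan (by
        rw [hdim]
        exact_mod_cast (Set.encard_insert_le _ _).trans (add_le_add_left hcard 1))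
      have : IsDomain R := isDomain_of_isRegularLocalRing
      refine IsSMulRegular.of_ne_zero ?_
      rintro rfl
      rw [Ideal.span_insert_zero] at hspan
      have h := (ringKrullDim_le_encard_of_span_eq_maximalIdeal hspan).trans
        (WithBot.coe_le_coe.mpr hcard)
      rw [hdim] at h
      exact absurd (by exact_mod_cast h : n + 1 ≤ n) (by omega)
    refine (isWeaklyRegular_cons_iff R r l).mpr ⟨hr, ?_⟩
    have ih' : IsWeaklyRegular (R ⧸ span {r}) (l.map (algebraMap R (R ⧸ span {r}))) := by
      refine ih ?_ (by simpa using hn) hdim'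
      rw [← Ideal.map_ofList, ← span_image_mk_eq_maximalIdeal hspan, Ideal.ofList, Ideal.map_span]
      rfl
    refine (LinearEquiv.isWeaklyRegular_congr (Submodule.quotEquivOfEq _ _ ?_) l).mp
      ((isWeaklyRegular_map_algebraMap_iff (R ⧸ span {r}) (R ⧸ span {r}) l).mp ih')
    rw [← Submodule.ideal_span_singleton_smul, smul_eq_mul, Ideal.mul_top]

theorem isWeaklyRegular_map_pow {R M ι : Type*} [CommRing R] [IsLocalRing R] [AddCommGroup M]
    [Module R M] [IsNoetherian R M] {x : ι → R} (hx : ∀ i, x i ∈ maximalIdeal R)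
    {b : ι → ℕ} (hb : ∀ i, b i ≠ 0) {l : List ι} (hl : IsWeaklyRegular M (l.map x)) :
    IsWeaklyRegular M (l.map fun i => x i ^ b i) := by
  induction l generalizing M with
  | nil => exact .nil _ _
  | cons i l ih =>
    let l' := l.map fun i => x i ^ b i
    have hpow (i : ι) : x i ^ b i ∈ maximalIdeal R :=
      Ideal.pow_mem_of_mem _ (hx i) _ (Nat.pos_of_ne_zero (hb i))
    have hl' : ∀ r ∈ l', r ∈ maximalIdeal R := List.forall_mem_map.mpr fun i _ => hpow i
    obtain ⟨hi, hl⟩ := (isWeaklyRegular_cons_iff M (x i) (l.map x)).mp hl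
    have hcons : IsWeaklyRegular M (x i :: l') := .cons hi (ih hl)
    have hlast : IsWeaklyRegular M (l' ++ [x i]) :=
      isWeaklyRegular_of_perm_of_subset_maximalIdeal hcons (List.perm_append_singleton _ _).symm
        (List.forall_mem_cons.mpr ⟨hx i, hl'⟩)
    have hlast_pow : IsWeaklyRegular M (l' ++ [x i ^ b i]) := by
      rw [isWeaklyRegular_append_iff, isWeaklyRegular_singleton_iff] at hlast ⊢
      exact ⟨hlast.1, hlast.2.pow _⟩
    exact isWeaklyRegular_of_perm_of_subset_maximalIdeal hlast_pow (List.perm_append_singleton _ _)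
      (List.forall_mem_append.mpr ⟨hl', List.forall_mem_singleton.mpr (hpow i)⟩)

end RegularLocalRing

section PowIdeal

open Ideal (span)
open RingTheory.Sequence

variable {R ι : Type*} [CommRing R]

/-- A regular system of parameters of a local ring: a generating family of the maximal ideal with
as many members as the Krull dimension. In a Noetherian local ring it exists iff the ring is
regular. -/
structure IsRegularSystemOfParameters [Fintype ι] [IsLocalRing R] (x : ι → R) : Prop where
  span_range_eq : span (Set.range x) = maximalIdeal R
  ringKrullDim_eq : ringKrullDim R = Fintype.card ι

/-- The ideal `(x i ^ b i | i)`. For parameters `x`, these ideals comprise the Frobenius powers of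
the maximal ideal and allow computations with them to be made one exponent at a time. -/
def powIdeal (x : ι → R) (b : ι → ℕ) : Ideal R :=
  span (Set.range fun i => x i ^ b i)

variable {x : ι → R} {a b : ι → ℕ}

theorem pow_mem_powIdeal {i : ι} {m : ℕ} (h : b i ≤ m) : x i ^ m ∈ powIdeal x b :=
  Ideal.mem_of_dvd (powIdeal x b) (pow_dvd_pow (x i) h) (Ideal.subset_span ⟨i, rfl⟩)

theorem powIdeal_anti (h : a ≤ b) : powIdeal x b ≤ powIdeal x a := by
  rw [powIdeal, Ideal.span_le, Set.range_subset_iff]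
  exact fun i => pow_mem_powIdeal (h i)

theorem powIdeal_one : powIdeal x 1 = span (Set.range x) := by
  simp only [powIdeal, Pi.one_apply, pow_one]

theorem powIdeal_eq_sup (x : ι → R) (b : ι → ℕ) (i : ι) :
    powIdeal x b = span ((fun j => x j ^ b j) '' {i}ᶜ) ⊔ span {x i ^ b i} := by
  rw [← Ideal.span_union, ← Set.image_singleton (f := fun j => x j ^ b j), ← Set.image_union,
    Set.compl_union_self, Set.image_univ, powIdeal]

variable [Fintype ι]

theorem monomial_mem_powIdeal {i : ι} (h : b i ≤ a i) : ∏ j, x j ^ a j ∈ powIdeal x b :=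
  Ideal.mem_of_dvd _ (Finset.dvd_prod_of_mem (fun j => x j ^ a j) (Finset.mem_univ i))
    (pow_mem_powIdeal h)

theorem monomial_mem_span_range_pow (x : ι → R) (a : ι → ℕ) :
    ∏ i, x i ^ a i ∈ span (Set.range x) ^ ∑ i, a i := by
  rw [← Finset.prod_pow_eq_pow_sum]
  exact Ideal.prod_mem_prod fun i _ =>
    Ideal.pow_mem_pow (Ideal.subset_span (Set.mem_range_self i)) _

theorem monomial_mul_mem_powIdeal_add {g : R} (hg : g ∈ powIdeal x b) :
    (∏ i, x i ^ a i) * g ∈ powIdeal x (a + b) := by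
  suffices h : powIdeal x b ≤
      Submodule.comap (LinearMap.mulLeft R (∏ i, x i ^ a i)) (powIdeal x (a + b)) from h hg
  rw [powIdeal, Ideal.span_le]
  rintro _ ⟨i, rfl⟩
  have hdvd : x i ^ (a + b) i ∣ (∏ j, x j ^ a j) * x i ^ b i := by
    rw [Pi.add_apply, pow_add]
    exact mul_dvd_mul_right (Finset.dvd_prod_of_mem (fun j => x j ^ a j) (Finset.mem_univ i)) _
  exact Ideal.mem_of_dvd (powIdeal x (a + b)) hdvd (pow_mem_powIdeal le_rfl)

theorem exists_eq_sum_monomials_of_mem_span_range_pow {y : R} {N : ℕ}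
    (hy : y ∈ span (Set.range x) ^ N) :
    ∃ (s : Finset (ι → ℕ)) (c : (ι → ℕ) → R), (∀ a ∈ s, ∑ i, a i = N) ∧
      ∑ a ∈ s, c a * ∏ i, x i ^ a i = y := by
  obtain ⟨P, hP, rfl⟩ := (Ideal.mem_span_pow_iff_exists_isHomogeneous x y).mp hy
  refine ⟨P.support.map Finsupp.equivFunOnFinite.toEmbedding,
    fun a => P.coeff (Finsupp.equivFunOnFinite.symm a), ?_, ?_⟩
  · simp only [Finset.mem_map]
    rintro _ ⟨d, hd, rfl⟩
    have hdeg : d.degree = N := by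
      rw [Finsupp.degree_eq_weight_one]
      exact hP (MvPolynomial.mem_support_iff.mp hd)
    exact d.degree_eq_sum.symm.trans hdeg
  · simp [MvPolynomial.eval_eq']

/-- Pigeonhole: a monomial of degree above `∑ i, a i` has, for some `i`, an exponent above `a i`. -/
theorem span_range_pow_le_powIdeal {N : ℕ} (h : ∑ i, a i < N) :
    span (Set.range x) ^ N ≤ powIdeal x (a + 1) := by
  intro y hy
  obtain ⟨s, c, hs, rfl⟩ := exists_eq_sum_monomials_of_mem_span_range_pow hy
  refine Ideal.sum_mem _ fun d hd => Ideal.mul_mem_left _ _ ?_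
  obtain ⟨i, -, hi⟩ := Finset.exists_lt_of_sum_lt (h.trans_eq (hs d hd).symm)
  exact monomial_mem_powIdeal (i := i) hi

theorem exists_leading_monomial [IsLocalRing R] (hx : span (Set.range x) = maximalIdeal R)
    {I : Ideal R} {f : R} {N : ℕ} (hf : f ∈ maximalIdeal R ^ N ⊔ I)
    (hf' : f ∉ maximalIdeal R ^ (N + 1) ⊔ I) :
    ∃ (a : ι → ℕ) (u : Rˣ), ∑ i, a i = N ∧ ∏ i, x i ^ a i ∉ I ∧
      f - u * ∏ i, x i ^ a i ∈ I ⊔ powIdeal x (a + 1) := by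
  classical
  obtain ⟨_, hy, z, hz, rfl⟩ := Submodule.mem_sup.mp hf
  obtain ⟨s, c, hs, rfl⟩ := exists_eq_sum_monomials_of_mem_span_range_pow (hx ▸ hy)
  obtain ⟨a, ha, ⟨u, hu⟩, haI⟩ : ∃ a ∈ s, IsUnit (c a) ∧ ∏ i, x i ^ a i ∉ I := by
    by_contra! hsmall
    refine hf' (add_mem (Ideal.sum_mem _ fun a ha => ?_) (Ideal.mem_sup_right hz))
    by_cases hca : IsUnit (c a)
    · exact Ideal.mem_sup_right (Ideal.mul_mem_left _ _ (hsmall a ha hca))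
    · refine Ideal.mem_sup_left (pow_succ' (maximalIdeal R) N ▸ Ideal.mul_mem_mul hca ?_)
      exact hx ▸ hs a ha ▸ monomial_mem_span_range_pow x a
  refine ⟨a, u, hs a ha, haI, ?_⟩
  rw [← Finset.add_sum_erase s _ ha, hu, add_assoc, add_sub_cancel_left]
  refine add_mem (Ideal.mem_sup_right (Ideal.sum_mem _ fun d hd => Ideal.mul_mem_left _ _ ?_))
    (Ideal.mem_sup_left hz)
  obtain ⟨hda, hds⟩ := Finset.mem_erase.mp hd
  obtain ⟨i, hi⟩ : ∃ i, a i < d i := by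
    by_contra! hle
    exact hda (funext fun i => (Finset.sum_eq_sum_iff_of_le fun i _ => hle i).mp
      ((hs d hds).trans (hs a ha).symm) i (Finset.mem_univ i))
  exact monomial_mem_powIdeal (i := i) hi

variable [IsLocalRing R]

theorem IsRegularSystemOfParameters.mem_maximalIdeal
    (hx : IsRegularSystemOfParameters x) (i : ι) : x i ∈ maximalIdeal R :=
  hx.span_range_eq ▸ Ideal.subset_span ⟨i, rfl⟩

/-- When `x` is a regular system of parameters, the monomial is a generator of the socle of the
quotient by `powIdeal x (b + 1)`, which lies in every nonzero ideal. -/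
theorem exists_mul_sub_monomial_mem_powIdeal (hx : span (Set.range x) = maximalIdeal R)
    {f : R} (hf : f ∉ powIdeal x (b + 1)) :
    ∃ r, r * f - ∏ i, x i ^ b i ∈ powIdeal x (b + 1) := by
  classical
  set I := powIdeal x (b + 1)
  have hex : ∃ N, f ∉ maximalIdeal R ^ (N + 1) ⊔ I := by
    refine ⟨∑ i, b i, ?_⟩
    rwa [sup_eq_right.mpr (hx ▸ span_range_pow_le_powIdeal (Nat.lt_succ_self _))]
  have hord : f ∈ maximalIdeal R ^ Nat.find hex ⊔ I := by
    rcases Nat.eq_zero_or_eq_succ_pred (Nat.find hex) with h | h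
    · simp [h]
    · rw [h]; exact not_not.mp (Nat.find_min hex (Nat.pred_lt (by omega)))
  obtain ⟨a, u, -, haI, hau⟩ := exists_leading_monomial hx hord (Nat.find_spec hex)
  have hab : a ≤ b := fun i => not_lt.mp fun hi => haI (monomial_mem_powIdeal (i := i) hi)
  have hprod : (∏ i, x i ^ (b - a) i) * ∏ i, x i ^ a i = ∏ i, x i ^ b i := by
    simp only [← Finset.prod_mul_distrib, ← pow_add, Pi.sub_apply, Nat.sub_add_cancel (hab _)]
  refine ⟨(∏ i, x i ^ (b - a) i) * ↑u⁻¹, ?_⟩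
  have hmul : (∏ i, x i ^ (b - a) i) * (f - u * ∏ i, x i ^ a i) ∈ I := by
    obtain ⟨y, hy, z, hz, hyz⟩ := Submodule.mem_sup.mp hau
    rw [← hyz, mul_add]
    refine add_mem (Ideal.mul_mem_left _ _ hy) ?_
    have := monomial_mul_mem_powIdeal_add (a := b - a) hz
    rwa [← add_assoc, tsub_add_cancel_of_le hab] at this
  convert Ideal.mul_mem_left I ↑u⁻¹ hmul using 1
  rw [← hprod]
  linear_combination (∏ i, x i ^ (b - a) i) * (∏ i, x i ^ a i) * u.inv_mul

variable [IsNoetherianRing R]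

theorem IsRegularSystemOfParameters.isWeaklyRegular_map (hx : IsRegularSystemOfParameters x)
    {l : List ι} (hnodup : l.Nodup) (hmem : ∀ i, i ∈ l) : IsWeaklyRegular R (l.map x) := by
  classical
  have hl : l.toFinset = Finset.univ := by ext; simp [hmem]
  refine isWeaklyRegular_of_ofList_eq_maximalIdeal ?_ ?_
  · rw [← hx.span_range_eq, Ideal.ofList]
    congr 1
    ext; simp [hmem]
  · rw [hx.ringKrullDim_eq, List.length_map, ← List.toFinset_card_of_nodup hnodup, hl,
      Finset.card_univ]

theorem IsRegularSystemOfParameters.isSMulRegular_quotient (hx : IsRegularSystemOfParameters x)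
    (hb : ∀ i, b i ≠ 0) (i : ι) :
    IsSMulRegular (R ⧸ span ((fun j => x j ^ b j) '' {i}ᶜ)) (x i) := by
  classical
  let c := Function.update b i 1
  have hc (j : ι) : c j ≠ 0 := by
    rcases eq_or_ne j i with rfl | hj
    · simp [c]
    · simpa [c, hj] using hb j
  let l := (Finset.univ.erase i).toList
  have hreg : IsWeaklyRegular R ((l ++ [i]).map fun j => x j ^ c j) :=
    isWeaklyRegular_map_pow hx.mem_maximalIdeal hc <| hx.isWeaklyRegular_map
      (by simp [l, List.nodup_append, Finset.nodup_toList]) fun j => by simp [l, em']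
  have hl : Ideal.ofList (l.map fun j => x j ^ c j) = span ((fun j => x j ^ b j) '' {i}ᶜ) := by
    rw [Set.image_congr (g := fun j => x j ^ c j) fun j hj => by simp [c, Function.update_of_ne hj],
      Ideal.ofList]
    congr 1
    ext r
    simp [l]
  rw [List.map_append, isWeaklyRegular_append_iff, List.map_singleton,
    isWeaklyRegular_singleton_iff, hl] at hreg
  rw [smul_eq_mul, Ideal.mul_top] at hreg
  simpa [c] using hreg.2

theorem IsRegularSystemOfParameters.mem_powIdeal_of_pow_mul_mem [DecidableEq ι]
    (hx : IsRegularSystemOfParameters x) {i : ι} {m : ℕ} {b : ι → ℕ} {g : R}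
    (h : x i ^ m * g ∈ powIdeal x (Pi.single i m + b)) : g ∈ powIdeal x b := by
  by_cases hb : ∃ j, b j = 0
  · obtain ⟨j, hj⟩ := hb
    have htop : powIdeal x b = ⊤ :=
      (Ideal.eq_top_iff_one _).mpr (pow_zero (x j) ▸ pow_mem_powIdeal hj.le)
    exact htop ▸ Submodule.mem_top
  push Not at hb
  have hJ : (fun j => x j ^ ((Pi.single i m : ι → ℕ) + b) j) '' {i}ᶜ =
      (fun j => x j ^ b j) '' {i}ᶜ :=
    Set.image_congr fun j hj => by rw [Pi.add_apply, Pi.single_eq_of_ne hj, zero_add]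
  rw [powIdeal_eq_sup x _ i, hJ] at h
  rw [powIdeal_eq_sup x b i]
  obtain ⟨y, hy, z, hz, hyz⟩ := Submodule.mem_sup.mp h
  obtain ⟨r, rfl⟩ := Ideal.mem_span_singleton'.mp hz
  have hmul : x i ^ m * (g - r * x i ^ b i) = y := by
    rw [Pi.add_apply, Pi.single_eq_same, pow_add] at hyz
    linear_combination -hyz
  have hsub : g - r * x i ^ b i ∈ span ((fun j => x j ^ b j) '' {i}ᶜ) :=
    mem_of_isSMulRegular_quotient_of_smul_mem ((hx.isSMulRegular_quotient hb i).pow m)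
      (by rwa [smul_eq_mul, hmul])
  exact sub_add_cancel g (r * x i ^ b i) ▸
    Submodule.add_mem_sup hsub (Ideal.mul_mem_left _ r (Ideal.mem_span_singleton_self _))

theorem IsRegularSystemOfParameters.mem_powIdeal_of_monomial_mul_mem
    (hx : IsRegularSystemOfParameters x) {a b : ι → ℕ} {g : R}
    (h : (∏ i, x i ^ a i) * g ∈ powIdeal x (a + b)) : g ∈ powIdeal x b := by
  classical
  induction a using Pi.single_induction generalizing b g with
  | zero => simpa using h
  | add a a' ha ha' =>
    refine ha' (ha ?_)
    simpa only [Pi.add_apply, pow_add, Finset.prod_mul_distrib, mul_assoc, add_assoc] using h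
  | single i m =>
    refine hx.mem_powIdeal_of_pow_mul_mem (i := i) (m := m) ?_
    have hprod : ∏ j, x j ^ (Pi.single i m : ι → ℕ) j = x i ^ m := by
      rw [Finset.prod_eq_single i (fun j _ hj => by simp [hj]) (by simp), Pi.single_eq_same]
    rwa [hprod] at h

end PowIdeal

section Frobenius

open Ideal (span)

variable {R ι : Type*} [CommRing R]

/-- The Frobenius power `I^{[q]}`, generated by the `q`-th powers of all elements of `I`. The
exponent is arbitrary; when `q` is a power of the exponential characteristic, this is the extension
of `I` along an iterated Frobenius. -/
def frobeniusPower (I : Ideal R) (q : ℕ) : Ideal R :=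
  span ((· ^ q) '' (I : Set R))

theorem pow_mem_frobeniusPower {I : Ideal R} {f : R} (hf : f ∈ I) (q : ℕ) :
    f ^ q ∈ frobeniusPower I q :=
  Ideal.subset_span ⟨f, hf, rfl⟩

theorem frobeniusPower_le_pow (I : Ideal R) (q : ℕ) : frobeniusPower I q ≤ I ^ q :=
  Ideal.span_le.mpr (Set.image_subset_iff.mpr fun _ hy => Ideal.pow_mem_pow hy q)

variable {p : ℕ} [ExpChar R p]

theorem frobeniusPower_eq_map (I : Ideal R) (k : ℕ) :
    frobeniusPower I (p ^ k) = I.map (iterateFrobenius R p k) := rfl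

theorem frobeniusPower_frobeniusPower (I : Ideal R) (e k : ℕ) :
    frobeniusPower (frobeniusPower I (p ^ e)) (p ^ k) = frobeniusPower I (p ^ (e + k)) := by
  simp only [frobeniusPower_eq_map, Ideal.map_map]
  congr 1
  ext y
  simp [iterateFrobenius_def, ← pow_mul, pow_add]

theorem frobeniusPower_powIdeal (x : ι → R) (b : ι → ℕ) (k : ℕ) :
    frobeniusPower (powIdeal x b) (p ^ k) = powIdeal x (p ^ k • b) := by
  rw [frobeniusPower_eq_map, powIdeal, Ideal.map_span, ← Set.range_comp, powIdeal]
  congr 2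
  ext i
  simp [iterateFrobenius_def, ← pow_mul, mul_comm]

theorem pow_sub_pow_mem_powIdeal {x : ι → R} {b : ι → ℕ} {f g : R} (h : f - g ∈ powIdeal x b)
    (k : ℕ) : f ^ p ^ k - g ^ p ^ k ∈ powIdeal x (p ^ k • b) := by
  rw [← sub_pow_expChar_pow, ← frobeniusPower_powIdeal]
  exact pow_mem_frobeniusPower h _

theorem prod_pow_pow_eq [Fintype ι] (x : ι → R) (a : ι → ℕ) (m : ℕ) :
    (∏ i, x i ^ a i) ^ m = ∏ i, x i ^ (m • a) i := by
  simp [← Finset.prod_pow, ← pow_mul, mul_comm]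

namespace IsRegularSystemOfParameters

variable [IsLocalRing R] [Fintype ι] {x : ι → R} {f g : R}

theorem frobeniusPower_maximalIdeal (hx : IsRegularSystemOfParameters x) (k : ℕ) :
    frobeniusPower (maximalIdeal R) (p ^ k) = powIdeal x (p ^ k • 1) := by
  rw [← hx.span_range_eq, ← powIdeal_one, frobeniusPower_powIdeal]

variable [IsNoetherianRing R]

theorem mem_powIdeal_of_expChar_pow_mul_mem (hx : IsRegularSystemOfParameters x) {b : ι → ℕ} {k : ℕ}
    (hf : f ∉ powIdeal x (b + 1)) (h : f ^ p ^ k * g ∈ powIdeal x (p ^ k • (b + 1))) :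
    g ∈ powIdeal x (p ^ k • 1) := by
  obtain ⟨r, hr⟩ := exists_mul_sub_monomial_mem_powIdeal hx.span_range_eq hf
  have hr' := pow_sub_pow_mem_powIdeal (p := p) hr k
  rw [mul_pow, prod_pow_pow_eq] at hr'
  refine hx.mem_powIdeal_of_monomial_mul_mem (a := p ^ k • b) ?_
  rw [← smul_add]
  convert sub_mem (Ideal.mul_mem_left _ (r ^ p ^ k) h) (Ideal.mul_mem_right g _ hr') using 1
  ring

theorem pow_notMem_maximalIdeal_pow (hx : IsRegularSystemOfParameters x) {N : ℕ}
    (hf : f ∈ maximalIdeal R ^ N) (hf' : f ∉ maximalIdeal R ^ (N + 1)) (k : ℕ) :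
    f ^ p ^ k ∉ maximalIdeal R ^ (p ^ k * N + 1) := by
  intro hmem
  obtain ⟨a, u, ha, -, hau⟩ := exists_leading_monomial (I := ⊥) (f := f) (N := N) hx.span_range_eq
    (by rwa [sup_bot_eq]) (by rwa [sup_bot_eq])
  rw [bot_sup_eq] at hau
  have hsub : f ^ p ^ k - (u * ∏ i, x i ^ a i) ^ p ^ k ∈ powIdeal x (p ^ k • a + 1) := by
    refine powIdeal_anti ?_ (pow_sub_pow_mem_powIdeal (p := p) hau k)
    rw [smul_add]
    gcongr
    exact fun i => by simpa using Nat.one_le_iff_ne_zero.mpr (pow_ne_zero k (expChar_ne_zero R p))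
  have hpow : f ^ p ^ k ∈ powIdeal x (p ^ k • a + 1) := by
    refine span_range_pow_le_powIdeal ?_ (hx.span_range_eq ▸ hmem)
    simp [← Finset.mul_sum, ha]
  have hu : (u : R) ^ p ^ k ∈ maximalIdeal R := by
    rw [← hx.span_range_eq, ← powIdeal_one]
    refine hx.mem_powIdeal_of_monomial_mul_mem (a := p ^ k • a) ?_
    rw [← prod_pow_pow_eq, mul_comm, ← mul_pow]
    exact (Submodule.sub_mem_iff_right _ hpow).mp hsub
  exact (IsLocalRing.mem_maximalIdeal _).mp hu (u.isUnit.pow _)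

end IsRegularSystemOfParameters

variable [IsLocalRing R] [IsNoetherianRing R] [Fintype ι] {x : ι → R} {f g : R}

theorem le_mul_of_pow_mem_maximalIdeal_pow (hp : 1 < p) (hx : IsRegularSystemOfParameters x)
    {N t M : ℕ} (hf : f ∈ maximalIdeal R ^ N) (hf' : f ∉ maximalIdeal R ^ (N + 1))
    (h : f ^ t ∈ maximalIdeal R ^ M) : M ≤ t * N := by
  by_contra! hlt
  obtain ⟨s, hs⟩ := Nat.exists_eq_add_of_le (Nat.lt_pow_self hp : t < p ^ t).le
  refine hx.pow_notMem_maximalIdeal_pow (p := p) hf hf' t ?_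
  have hmul := Ideal.mul_mem_mul (Ideal.pow_le_pow_right (Nat.succ_le_of_lt hlt) h)
    (Ideal.pow_mem_pow hf s)
  rw [← pow_add, ← hs, ← pow_mul, ← pow_add] at hmul
  convert hmul using 2
  rw [hs, Nat.succ_eq_add_one]
  ring

theorem le_mul_of_pow_mem_frobeniusPower (hp : 1 < p) (hx : IsRegularSystemOfParameters x)
    {N t M : ℕ} (hf : f ∈ maximalIdeal R ^ N) (hf' : f ∉ maximalIdeal R ^ (N + 1))
    (h : f ^ t ∈ frobeniusPower (maximalIdeal R) M) : M ≤ t * N :=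
  le_mul_of_pow_mem_maximalIdeal_pow hp hx hf hf' (frobeniusPower_le_pow _ _ h)

/-- A consequence of the flatness of Frobenius over a regular ring, obtained here from the colon
identity for monomials instead. -/
theorem mem_frobeniusPower_of_pow_mul_mem (hx : IsRegularSystemOfParameters x) {e k : ℕ}
    (hf : f ∉ frobeniusPower (maximalIdeal R) (p ^ e))
    (h : f ^ p ^ k * g ∈ frobeniusPower (maximalIdeal R) (p ^ (e + k))) :
    g ∈ frobeniusPower (maximalIdeal R) (p ^ k) := by
  obtain ⟨b, hb⟩ : ∃ b : ι → ℕ, p ^ e • 1 = b + 1 :=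
    ⟨p ^ e • 1 - 1, (tsub_add_cancel_of_le fun i => by
      simpa using Nat.one_le_iff_ne_zero.mpr (pow_ne_zero e (expChar_ne_zero R p))).symm⟩
  rw [hx.frobeniusPower_maximalIdeal, hb] at hf
  rw [← frobeniusPower_frobeniusPower, hx.frobeniusPower_maximalIdeal, frobeniusPower_powIdeal,
    hb] at h
  rw [hx.frobeniusPower_maximalIdeal]
  exact hx.mem_powIdeal_of_expChar_pow_mul_mem hf h

theorem mul_add_one_le_of_notMem_frobeniusPower (hp : 1 < p) (hx : IsRegularSystemOfParameters x)
    {N e k t : ℕ} (hf : f ∈ maximalIdeal R ^ N) (hf' : f ∉ maximalIdeal R ^ (N + 1))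
    (hfe : f ∉ frobeniusPower (maximalIdeal R) (p ^ e))
    (h : f ^ t ∈ frobeniusPower (maximalIdeal R) (p ^ k)) :
    p ^ k * (N + 1) ≤ t * p ^ e * N := by
  have hmem : f ^ (t * p ^ e) ∈ frobeniusPower (maximalIdeal R) (p ^ (k + e)) := by
    rw [pow_mul, ← frobeniusPower_frobeniusPower]
    exact pow_mem_frobeniusPower h _
  set s := t * p ^ e - p ^ k
  have hsplit : f ^ p ^ k * f ^ s ∈ frobeniusPower (maximalIdeal R) (p ^ (e + k)) := by
    rw [← pow_add, add_comm e k]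
    exact Ideal.pow_mem_of_pow_mem _ hmem le_add_tsub
  have hsN : p ^ k ≤ s * N :=
    le_mul_of_pow_mem_frobeniusPower hp hx hf hf' (mem_frobeniusPower_of_pow_mul_mem hx hfe hsplit)
  have hs_pos : 0 < s :=
    Nat.pos_of_mul_pos_right ((Nat.pow_pos (Nat.zero_lt_of_lt hp)).trans_le hsN)
  calc p ^ k * (N + 1) = p ^ k * N + p ^ k := mul_add_one _ _
    _ ≤ p ^ k * N + s * N := by gcongr
    _ = t * p ^ e * N := by
      rw [← add_mul, Nat.add_sub_of_le (Nat.lt_of_sub_pos hs_pos).le]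

end Frobenius

section FThreshold

variable {R ι : Type*} [CommRing R] {p : ℕ} {I : Ideal R} {f : R}

/-- The `F`-threshold of `f` with respect to `I` in characteristic `p`, as the infimum of the
`t / p ^ e` with `f ^ t ∈ I^{[p ^ e]}`. It is the junk value `sInf ∅ = 0` if `f` is not in the
radical of `I`. -/
noncomputable def fThreshold (p : ℕ) (I : Ideal R) (f : R) : ℝ :=
  sInf {r : ℝ | ∃ t e : ℕ, f ^ t ∈ frobeniusPower I (p ^ e) ∧ r = (t : ℝ) / (p : ℝ) ^ e}

theorem fThreshold_le {t e : ℕ} (h : f ^ t ∈ frobeniusPower I (p ^ e)) :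
    fThreshold p I f ≤ t / (p : ℝ) ^ e :=
  csInf_le ⟨0, by rintro _ ⟨t, e, -, rfl⟩; positivity⟩ ⟨t, e, h, rfl⟩

theorem le_fThreshold (hf : f ∈ I.radical) {c : ℝ}
    (h : ∀ t e : ℕ, f ^ t ∈ frobeniusPower I (p ^ e) → c ≤ t / (p : ℝ) ^ e) :
    c ≤ fThreshold p I f := by
  obtain ⟨n, hn⟩ := hf
  refine le_csInf ⟨_, n, 0, ?_, rfl⟩ ?_
  · simpa using pow_mem_frobeniusPower hn 1
  · rintro _ ⟨t, e, hte, rfl⟩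
    exact h t e hte

variable [IsLocalRing R] [IsNoetherianRing R] [ExpChar R p] [Fintype ι] {x : ι → R} {N : ℕ}

theorem one_div_le_fThreshold (hp : 1 < p) (hx : IsRegularSystemOfParameters x) (hN : N ≠ 0)
    (hf : f ∈ maximalIdeal R ^ N) (hf' : f ∉ maximalIdeal R ^ (N + 1)) :
    1 / (N : ℝ) ≤ fThreshold p (maximalIdeal R) f := by
  refine le_fThreshold (Ideal.le_radical (Ideal.pow_le_self hN hf)) fun t k h => ?_
  have hle : (p : ℝ) ^ k ≤ t * N := mod_cast le_mul_of_pow_mem_frobeniusPower hp hx hf hf' h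
  rw [div_le_div_iff₀ (by positivity) (by positivity)]
  linarith

theorem one_div_add_le_fThreshold (hp : 1 < p) (hx : IsRegularSystemOfParameters x) (hN : N ≠ 0)
    (hf : f ∈ maximalIdeal R ^ N) (hf' : f ∉ maximalIdeal R ^ (N + 1)) {e : ℕ}
    (hfe : f ∉ frobeniusPower (maximalIdeal R) (p ^ e)) :
    (1 + 1 / (N : ℝ)) / (p : ℝ) ^ e ≤ fThreshold p (maximalIdeal R) f := by
  refine le_fThreshold (Ideal.le_radical (Ideal.pow_le_self hN hf)) fun t k h => ?_
  have hle : (p : ℝ) ^ k * (N + 1) ≤ t * p ^ e * N :=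
    mod_cast mul_add_one_le_of_notMem_frobeniusPower hp hx hf hf' hfe h
  rw [div_le_div_iff₀ (by positivity) (by positivity)]
  field_simp
  linarith

end FThreshold

/-- Let `(R, 𝔪)` be a regular local ring of characteristic `p > 0`,
let `f ∈ R`, and let `q = p^e` with `ord_𝔪(f) = q`.  Then the F-threshold
`ft^𝔪(f) = inf { t/p^{e'} : f^t ∈ 𝔪^{[p^{e'}]} }` equals `1/q` if and only if
`f ∈ 𝔪^{[q]}`, the ideal generated by `q`-th powers of elements of `𝔪`.
Regularity is expressed by requiring the maximal ideal to be generated by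
`ringKrullDim R` many elements. -/
theorem stmt_2 (R : Type*) [CommRing R] [IsLocalRing R] [IsNoetherianRing R]
    (p : ℕ) (hp : p.Prime) [CharP R p]
    (hreg : ∃ (n : ℕ) (x : Fin n → R),
      Ideal.span (Set.range x) = maximalIdeal R ∧ ringKrullDim R = n)
    (f : R) (e : ℕ) (q : ℕ) (hq : q = p ^ e)
    (hord : f ∈ (maximalIdeal R) ^ q ∧ f ∉ (maximalIdeal R) ^ (q + 1)) :
    sInf {r : ℝ | ∃ (t e' : ℕ),
        f ^ t ∈ Ideal.span ((· ^ (p ^ e')) '' (maximalIdeal R : Set R)) ∧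
        r = (t : ℝ) / (p : ℝ) ^ e'} = 1 / (q : ℝ)
      ↔ f ∈ Ideal.span ((· ^ q) '' (maximalIdeal R : Set R)) := by
  subst hq
  have : Fact p.Prime := ⟨hp⟩
  obtain ⟨n, x, hspan, hdim⟩ := hreg
  have hx : IsRegularSystemOfParameters x := ⟨hspan, by rwa [Fintype.card_fin]⟩
  have hq : p ^ e ≠ 0 := pow_ne_zero e hp.ne_zero
  change fThreshold p (maximalIdeal R) f = _ ↔ f ∈ frobeniusPower (maximalIdeal R) (p ^ e)
  refine ⟨fun hft => ?_, fun hf => le_antisymm ?_ ?_⟩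
  · by_contra hf
    have hlt := one_div_add_le_fThreshold hp.one_lt hx hq hord.1 hord.2 hf
    have hq_pos : (0 : ℝ) < (p : ℝ) ^ e := by exact_mod_cast Nat.pos_of_ne_zero hq
    rw [hft, Nat.cast_pow, div_le_div_iff_of_pos_right hq_pos] at hlt
    have := one_div_pos.mpr hq_pos
    linarith
  · simpa using fThreshold_le (t := 1) (by rwa [pow_one])
  · exact one_div_le_fThreshold hp.one_lt hx hq hord.1 hord.2
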